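/- Let p be an odd prime, r ≥ 1 an integer, b a unit of ℤ_p, and τ = [[b, 0],[0, −b]] ∈ M₂(ℤ_p). If k ∈ GL₂(ℤ_p) satisfies k τ k⁻¹ − τ ∈ p^r M₂(ℤ_p) (entrywise), then both off-diagonal entries of k lie in p^r ℤ_p; in particular k = d·k₁ with d an invertible diagonal matrix over ℤ_p and k₁ ∈ K(r). -/

import Mathlib

/-!
Multiplying `k τ k⁻¹ - τ` on the right by `k` gives the commutator of `k` with `τ = diagonal t`,
whose `(i, j)` entry is `(t j - t i) * k i j`; when the differences of the `t i` are units, this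
puts the off-diagonal entries of `k` in the ideal `I`. Modulo `I` the matrix `k` is then diagonal
and invertible, so its diagonal entries are units modulo `I`, hence units as soon as `I` lies in the
Jacobson radical. The diagonal part of `k` is thus an invertible `d` with `k ≡ d` modulo `I`.
-/

section Ideal

variable {n R : Type*} [Fintype n] [DecidableEq n] [CommRing R] {I : Ideal R}

theorem commutator_mem_matrix_of_conj_sub_mem_matrix {k : (Matrix n n R)ˣ} {A : Matrix n n R}
    (h : (k : Matrix n n R) * A * ((k⁻¹ : (Matrix n n R)ˣ) : Matrix n n R) - A ∈ I.matrix n) :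
    (k : Matrix n n R) * A - A * (k : Matrix n n R) ∈ I.matrix n := by
  rw [← Units.inv_mul_cancel_right ((k : Matrix n n R) * A) k, ← sub_mul]
  intro i j
  exact I.sum_mem fun l _ => I.mul_mem_right _ (h i l)

theorem apply_mem_of_commutator_diagonal_apply_mem {A : Matrix n n R} {t : n → R} {i j : n}
    (ht : IsUnit (t i - t j))
    (h : (A * Matrix.diagonal t - Matrix.diagonal t * A) i j ∈ I) : A i j ∈ I := by
  have commutator_apply : (A * Matrix.diagonal t - Matrix.diagonal t * A) i j =
      -((t i - t j) * A i j) := by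
    rw [Matrix.sub_apply, Matrix.mul_diagonal, Matrix.diagonal_mul]
    ring
  rw [commutator_apply, neg_mem_iff] at h
  exact (I.unit_mul_mem_iff_mem ht).1 h

theorem isUnit_apply_self_of_mul_eq_one (hI : I ≤ Ideal.jacobson ⊥) {A B : Matrix n n R}
    (hAB : A * B = 1) {i : n} (hA : ∀ j, j ≠ i → A i j ∈ I) : IsUnit (A i i) := by
  have row_mul_col : A i i * B i i + ∑ j ∈ Finset.univ.erase i, A i j * B j i = 1 := by
    rw [Finset.add_sum_erase _ (fun j => A i j * B j i) (Finset.mem_univ i), ← Matrix.mul_apply,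
      hAB, Matrix.one_apply_eq]
  have sum_erase_mem : ∑ j ∈ Finset.univ.erase i, A i j * B j i ∈ I :=
    I.sum_mem fun j hj => I.mul_mem_right _ (hA j (Finset.ne_of_mem_erase hj))
  have sub_one_mem : A i i * B i i - 1 ∈ I := by
    rw [← row_mul_col, sub_add_cancel_left]
    exact I.neg_mem sum_erase_mem
  exact isUnit_of_mul_isUnit_left
    (Ideal.isUnit_of_sub_one_mem_jacobson_bot _ (hI sub_one_mem))

theorem exists_eq_isDiag_mul_of_offDiag_mem (hI : I ≤ Ideal.jacobson ⊥) {k : (Matrix n n R)ˣ}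
    (hk : Pairwise fun i j => (k : Matrix n n R) i j ∈ I) :
    ∃ d k₁ : (Matrix n n R)ˣ,
      (d : Matrix n n R).IsDiag ∧ (k₁ : Matrix n n R) - 1 ∈ I.matrix n ∧ k = d * k₁ := by
  have isUnit_diag : IsUnit (k : Matrix n n R).diag :=
    Pi.isUnit_iff.2 fun _ => isUnit_apply_self_of_mul_eq_one hI k.mul_inv fun _ hj => hk hj.symm
  obtain ⟨d, hd⟩ := Matrix.isUnit_diagonal.2 isUnit_diag
  have sub_mem : (k : Matrix n n R) - d ∈ I.matrix n := by
    intro i j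
    rcases eq_or_ne i j with rfl | hij
    · simp [hd]
    · simpa [hd, hij] using hk hij
  refine ⟨d, d⁻¹ * k, hd ▸ Matrix.isDiag_diagonal _, ?_, (mul_inv_cancel_left d k).symm⟩
  rw [Units.val_mul, ← d.inv_mul, ← mul_sub]
  exact (I.matrix n).mul_mem_left _ sub_mem

theorem stmt_9_general (hI : I ≤ Ideal.jacobson ⊥) {t : n → R}
    (ht : Pairwise fun i j => IsUnit (t i - t j)) {k : (Matrix n n R)ˣ}
    (hk : (k : Matrix n n R) * Matrix.diagonal t * ((k⁻¹ : (Matrix n n R)ˣ) : Matrix n n R) -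
      Matrix.diagonal t ∈ I.matrix n) :
    (Pairwise fun i j => (k : Matrix n n R) i j ∈ I) ∧
    ∃ d k₁ : (Matrix n n R)ˣ,
      (d : Matrix n n R).IsDiag ∧ (k₁ : Matrix n n R) - 1 ∈ I.matrix n ∧ k = d * k₁ := by
  have offDiag_mem : Pairwise fun i j => (k : Matrix n n R) i j ∈ I := fun i j hij =>
    apply_mem_of_commutator_diagonal_apply_mem (ht hij)
      (commutator_mem_matrix_of_conj_sub_mem_matrix hk i j)
  exact ⟨offDiag_mem, exists_eq_isDiag_mul_of_offDiag_mem hI offDiag_mem⟩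

end Ideal

theorem pairwise_isUnit_sub_neg {R : Type*} [CommRing R] {b : R} (h : IsUnit (2 * b)) :
    Pairwise fun i j => IsUnit (![b, -b] i - ![b, -b] j) := by
  intro i j hij
  fin_cases i <;> fin_cases j
  · exact absurd rfl hij
  · simpa [two_mul] using h
  · simpa [two_mul, sub_eq_add_neg] using h.neg
  · exact absurd rfl hij

section PadicInt

variable {p : ℕ} [Fact p.Prime]

theorem padicInt_isUnit_two (hp : Odd p) : IsUnit (2 : ℤ_[p]) := by
  have norm_two : ‖((2 : ℕ) : ℤ_[p])‖ = 1 :=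
    PadicInt.norm_natCast_eq_one_iff.2 hp.coprime_two_right
  exact_mod_cast PadicInt.isUnit_iff.2 norm_two

theorem padicInt_span_pow_le_jacobson_bot {r : ℕ} (hr : 1 ≤ r) :
    Ideal.span {(p : ℤ_[p]) ^ r} ≤ Ideal.jacobson ⊥ := by
  rw [IsLocalRing.jacobson_eq_maximalIdeal ⊥ bot_ne_top, PadicInt.maximalIdeal_eq_span_p,
    Ideal.span_singleton_le_span_singleton]
  exact dvd_pow_self _ (Nat.one_le_iff_ne_zero.1 hr)

end PadicInt

/-- If `k ∈ GL₂(ℤ_p)` almost commutes with `τ = diag(b, −b)` (`b` a unit), in the sense that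
`k τ k⁻¹ − τ ∈ p^r M₂(ℤ_p)`, then the off-diagonal entries of `k` lie in `p^r ℤ_p`;
in particular `k = d·k₁` with `d` invertible diagonal and `k₁ ∈ K(r)`. -/
theorem stmt_9 (p : ℕ) [Fact p.Prime] (hp : Odd p) (r : ℕ) (hr : 1 ≤ r)
    (b : ℤ_[p]) (hb : IsUnit b)
    (k : (Matrix (Fin 2) (Fin 2) ℤ_[p])ˣ)
    (hk : ∀ i j, (p : ℤ_[p]) ^ r ∣
      ((k : Matrix (Fin 2) (Fin 2) ℤ_[p]) * !![b, 0; 0, -b] *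
          ((k⁻¹ : (Matrix (Fin 2) (Fin 2) ℤ_[p])ˣ) : Matrix (Fin 2) (Fin 2) ℤ_[p]) -
        !![b, 0; 0, -b]) i j) :
    ((p : ℤ_[p]) ^ r ∣ (k : Matrix (Fin 2) (Fin 2) ℤ_[p]) 0 1 ∧
      (p : ℤ_[p]) ^ r ∣ (k : Matrix (Fin 2) (Fin 2) ℤ_[p]) 1 0) ∧
    ∃ d k₁ : (Matrix (Fin 2) (Fin 2) ℤ_[p])ˣ,
      (∀ i j, i ≠ j → (d : Matrix (Fin 2) (Fin 2) ℤ_[p]) i j = 0) ∧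
      (∀ i j, (p : ℤ_[p]) ^ r ∣ ((k₁ : Matrix (Fin 2) (Fin 2) ℤ_[p]) - 1) i j) ∧
      k = d * k₁ := by
  simp only [← Ideal.mem_span_singleton, ← Matrix.diagonal_vec2] at hk ⊢
  obtain ⟨offDiag_mem, d, k₁, hd, hk₁, rfl⟩ := stmt_9_general
    (padicInt_span_pow_le_jacobson_bot hr)
    (pairwise_isUnit_sub_neg ((padicInt_isUnit_two hp).mul hb)) hk
  exact ⟨⟨offDiag_mem zero_ne_one, offDiag_mem one_ne_zero⟩, d, k₁, fun _ _ h => hd h, hk₁, rfl⟩
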